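/- Let F, G ∈ ℝ with F > 1, G > 1, F² ≥ G, and G² ≥ F. Define C₁ : ℝ → ℝ by C₁(s) = ∫ ν, (Real.log ((1 + G·Real.exp (−s² + √2·s·ν)) / (1 + F⁻¹·Real.exp (−s² + √2·s·ν))) + G·Real.log ((1 + G⁻¹·Real.exp (−s² − √2·s·ν)) / (1 + F·Real.exp (−s² − √2·s·ν)))) ∂(gaussianReal 0 1). Then C₁ is strictly increasing on (0, ∞). -/

import Mathlib

open MeasureTheory ProbabilityTheory

/-- The channel penalty term under `H₁` for an AWGN channel, as a function of the
normalized signaling separation `s`, where `F = (1-α)/α` and `G = (1-β)/β`. -/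
noncomputable def awgnPenaltyH1 (F G : ℝ) (s : ℝ) : ℝ :=
  ∫ ν, (Real.log ((1 + G * Real.exp (-s^2 + Real.sqrt 2 * s * ν)) /
          (1 + F⁻¹ * Real.exp (-s^2 + Real.sqrt 2 * s * ν)))
      + G * Real.log ((1 + G⁻¹ * Real.exp (-s^2 - Real.sqrt 2 * s * ν)) /
          (1 + F * Real.exp (-s^2 - Real.sqrt 2 * s * ν)))) ∂(gaussianReal 0 1)

/-!
Let `L` be the log-likelihood ratio of the channel output between the two symbols. It has law
`N(-v/2, v)` under one symbol and `N(v/2, v)` under the other, where `v = 2 s²`. A Gaussian change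
of measure merges the two terms of `C₁` into the expectation of a single function of `exp L` under
the first law, namely `φ (exp L)` up to an additive constant, where
`φ x = (1 + G x) log ((1 + G x) / (F + x))`. This `φ` is the perspective of `x log x` along a line,
and it is strictly convex as long as the line misses the origin, that is, as long as `F G ≠ 1`.
Increasing `v` multiplies `exp L` by an independent nonconstant factor of mean one, so Jensen's
inequality, conditionally on the old `L`, makes the expectation strictly larger.
-/

open Set
open scoped NNReal

section Perspective

variable {E : Type*} [AddCommGroup E] [Module ℝ E]

lemma strictConvexOn_perspective {f : ℝ → ℝ} {p q : E →ᵃ[ℝ] ℝ} {s : Set ℝ} {t : Set E}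
    (hf : StrictConvexOn ℝ s f) (ht : Convex ℝ t) (hq : ∀ x ∈ t, 0 < q x)
    (hmaps : MapsTo (fun x ↦ p x / q x) t s) (hinj : InjOn (fun x ↦ p x / q x) t) :
    StrictConvexOn ℝ t fun x ↦ q x * f (p x / q x) := by
  refine ⟨ht, fun x hx y hy hxy a b ha hb hab ↦ ?_⟩
  have hqx := hq x hx
  have hqy := hq y hy
  set z := a • x + b • y
  have hqz : 0 < q z := hq z (ht hx hy ha.le hb.le hab)
  have hqz_eq : q z = a * q x + b * q y := Convex.combo_affine_apply hab
  have hpz_eq : p z = a * p x + b * p y := Convex.combo_affine_apply hab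
  have hratio : p z / q z = a * q x / q z * (p x / q x) + b * q y / q z * (p y / q y) := by
    rw [hpz_eq]
    field
  have hweights : a * q x / q z + b * q y / q z = 1 := by
    rw [← add_div, ← hqz_eq, div_self hqz.ne']
  calc q z * f (p z / q z)
      < q z * (a * q x / q z * f (p x / q x) + b * q y / q z * f (p y / q y)) := by
        rw [hratio]
        exact mul_lt_mul_of_pos_left (hf.2 (hmaps hx) (hmaps hy) (hinj.ne hx hy hxy)
          (by positivity) (by positivity) hweights) hqz
    _ = a • (q x * f (p x / q x)) + b • (q y * f (p y / q y)) := by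
        simp only [smul_eq_mul]
        field

end Perspective

lemma integral_lt_integral_of_ae_lt {α : Type*} {mα : MeasurableSpace α} {μ : Measure α}
    [NeZero μ] {f g : α → ℝ} (hf : Integrable f μ) (hg : Integrable g μ)
    (hfg : ∀ᵐ x ∂μ, f x < g x) : ∫ x, f x ∂μ < ∫ x, g x ∂μ := by
  have hle : f ≤ᵐ[μ] g := hfg.mono fun _ ↦ le_of_lt
  refine (integral_mono_ae hf hg hle).lt_of_ne fun heq ↦ ?_
  obtain ⟨x, hlt, hx⟩ := (hfg.and ((integral_eq_iff_of_ae_le hf hg hle).1 heq)).exists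
  exact hlt.ne hx

section Jensen

variable {φ : ℝ → ℝ} {μ ν : Measure ℝ}

lemma map_exp_lt_integral [IsProbabilityMeasure ν] (hφ : StrictConvexOn ℝ (Ici 0) φ)
    (hφc : ContinuousOn φ (Ici 0)) (hmean : ∫ y, Real.exp y ∂ν = 1) (hν : ∃ᵐ y ∂ν, y ≠ 0) {x : ℝ}
    (hint : Integrable (fun y ↦ φ (Real.exp (x + y))) ν) :
    φ (Real.exp x) < ∫ y, φ (Real.exp (x + y)) ∂ν := by
  have hexp : Integrable Real.exp ν := .of_integral_ne_zero (hmean ▸ one_ne_zero)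
  have hshift : ∫ y, Real.exp (x + y) ∂ν = Real.exp x := by
    simp_rw [Real.exp_add, integral_const_mul, hmean, mul_one]
  have hexp_shift : Integrable (fun y ↦ Real.exp (x + y)) ν := by
    simpa only [Real.exp_add] using hexp.const_mul (Real.exp x)
  rcases hφ.ae_eq_const_or_map_average_lt hφc isClosed_Ici
    (.of_forall fun y ↦ (Real.exp_pos (x + y)).le) hexp_shift hint with hconst | hlt
  · refine absurd ?_ hν
    filter_upwards [hconst] with y hy
    simpa [average_eq_integral, hshift] using hy
  · simpa only [average_eq_integral, hshift] using hlt

theorem integral_comp_exp_lt_integral_conv [SFinite μ] [NeZero μ] [IsProbabilityMeasure ν]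
    (hφ : StrictConvexOn ℝ (Ici 0) φ) (hφc : ContinuousOn φ (Ici 0))
    (hmean : ∫ y, Real.exp y ∂ν = 1) (hν : ∃ᵐ y ∂ν, y ≠ 0)
    (hμ : Integrable (fun x ↦ φ (Real.exp x)) μ)
    (hconv : Integrable (fun x ↦ φ (Real.exp x)) (μ ∗ ν)) :
    ∫ x, φ (Real.exp x) ∂μ < ∫ x, φ (Real.exp x) ∂(μ ∗ ν) := by
  have hprod : Integrable (fun z : ℝ × ℝ ↦ φ (Real.exp (z.1 + z.2))) (μ.prod ν) :=
    (integrable_map_measure hconv.1 (by fun_prop)).1 hconv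
  rw [integral_conv hconv]
  refine integral_lt_integral_of_ae_lt hμ hprod.integral_prod_left ?_
  filter_upwards [hprod.prod_right_ae] with x hx
  exact map_exp_lt_integral hφ hφc hmean hν hx

end Jensen

section Gaussian

lemma gaussianPDFReal_add_mul_var (m t : ℝ) (v : ℝ≥0) (x : ℝ) :
    gaussianPDFReal (m + t * v) v x =
      Real.exp (t * x - (m * t + v * t ^ 2 / 2)) * gaussianPDFReal m v x := by
  rcases eq_or_ne v 0 with rfl | hv
  · simp
  have hv' : (v : ℝ) ≠ 0 := by exact_mod_cast hv
  rw [gaussianPDFReal, gaussianPDFReal, mul_left_comm, ← Real.exp_add]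
  congr 2
  field

lemma integral_gaussianReal_add_mul_var {E : Type*} [NormedAddCommGroup E] [NormedSpace ℝ E]
    (m t : ℝ) (v : ℝ≥0) (f : ℝ → E) :
    ∫ x, f x ∂gaussianReal (m + t * v) v =
      ∫ x, Real.exp (t * x - (m * t + v * t ^ 2 / 2)) • f x ∂gaussianReal m v := by
  rcases eq_or_ne v 0 with rfl | hv
  · rw [NNReal.coe_zero, mul_zero, add_zero, gaussianReal_zero_var]
    refine integral_congr_ae ?_
    rw [ae_dirac_eq]
    simp [Filter.EventuallyEq, mul_comm t]
  · simp_rw [integral_gaussianReal_eq_integral_smul hv, gaussianPDFReal_add_mul_var, smul_smul,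
      mul_comm]

lemma gaussianReal_map_add_mul (a c m : ℝ) (v : ℝ≥0) :
    (gaussianReal m v).map (fun x ↦ a + c * x) = gaussianReal (a + c * m) (‖c‖₊ ^ 2 * v) := by
  have hcomp : (fun x ↦ a + c * x) = (a + ·) ∘ (c * ·) := rfl
  rw [hcomp, ← Measure.map_map (by fun_prop) (by fun_prop), gaussianReal_map_const_mul,
    gaussianReal_map_const_add, add_comm]
  congr 2
  ext
  simp

lemma integrable_exp_gaussianReal (m : ℝ) (v : ℝ≥0) :
    Integrable Real.exp (gaussianReal m v) := by
  simpa only [one_mul] using integrable_exp_mul_gaussianReal (μ := m) (v := v) 1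

lemma integral_exp_gaussianReal_neg_half_var (v : ℝ≥0) :
    ∫ x, Real.exp x ∂gaussianReal (-(v / 2)) v = 1 := by
  simpa [mgf] using congrFun (mgf_fun_id_gaussianReal (μ := -(v / 2)) (v := v)) 1

lemma gaussianReal_neg_half_var_add (v w : ℝ≥0) :
    gaussianReal (-((v + w : ℝ≥0) / 2)) (v + w) =
      gaussianReal (-(v / 2)) v ∗ gaussianReal (-(w / 2)) w := by
  rw [gaussianReal_conv_gaussianReal]
  congr 1
  push_cast
  ring

theorem strictMono_integral_comp_exp_gaussianReal {φ : ℝ → ℝ} (hφ : StrictConvexOn ℝ (Ici 0) φ)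
    (hφc : ContinuousOn φ (Ici 0))
    (hint : ∀ v : ℝ≥0, Integrable (fun x ↦ φ (Real.exp x)) (gaussianReal (-(v / 2)) v)) :
    StrictMono fun v : ℝ≥0 ↦ ∫ x, φ (Real.exp x) ∂gaussianReal (-(v / 2)) v := by
  intro v v' hv
  obtain ⟨w, hw, rfl⟩ := exists_pos_add_of_lt' hv
  have := nullSingletonClass_gaussianReal (μ := -(w / 2)) hw.ne'
  have hint_add := hint (v + w)
  simp only [gaussianReal_neg_half_var_add] at hint_add ⊢
  exact integral_comp_exp_lt_integral_conv hφ hφc (integral_exp_gaussianReal_neg_half_var w)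
    (Measure.ae_ne _ 0).frequently (hint v) hint_add

end Gaussian

/-- The log-likelihood ratio of the two hypotheses, up to an additive constant, when the channel
output has likelihood ratio `x` between the two symbols. -/
noncomputable def awgnLogRatio (F G x : ℝ) : ℝ := Real.log ((1 + G * x) / (F + x))

/-- The integrand of the divergence between the channel output laws under the two hypotheses, up to
affine normalization, as a function of the likelihood ratio `x` between the two symbols. -/
noncomputable def awgnDivergenceIntegrand (F G x : ℝ) : ℝ := (1 + G * x) * awgnLogRatio F G x

section AWGN

variable {F G : ℝ}

lemma injOn_one_add_mul_div_add (hF : 0 < F) (hFG : F * G ≠ 1) :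
    InjOn (fun x ↦ (1 + G * x) / (F + x)) (Ici 0) := by
  intro x (hx : 0 ≤ x) y (hy : 0 ≤ y) hxy
  rw [div_eq_div_iff (by positivity) (by positivity)] at hxy
  have hmul : (F * G - 1) * (x - y) = 0 := by linear_combination hxy
  exact sub_eq_zero.1 ((mul_eq_zero.1 hmul).resolve_left (sub_ne_zero.2 hFG))

lemma strictConvexOn_awgnDivergenceIntegrand (hF : 0 < F) (hG : 0 ≤ G) (hFG : F * G ≠ 1) :
    StrictConvexOn ℝ (Ici 0) (awgnDivergenceIntegrand F G) := by
  let p : ℝ →ᵃ[ℝ] ℝ := AffineMap.lineMap 1 (1 + G)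
  let q : ℝ →ᵃ[ℝ] ℝ := AffineMap.lineMap F (F + 1)
  have hp (x : ℝ) : p x = 1 + G * x := by
    simp only [p, AffineMap.lineMap_apply_ring']
    ring
  have hq (x : ℝ) : q x = F + x := by
    simp only [q, AffineMap.lineMap_apply_ring']
    ring
  have hpersp : StrictConvexOn ℝ (Ici 0)
      fun x ↦ q x * (p x / q x * Real.log (p x / q x)) := by
    refine strictConvexOn_perspective Real.strictConvexOn_mul_log (convex_Ici 0) ?_ ?_ ?_
    · intro x (hx : 0 ≤ x)
      rw [hq]
      positivity
    · intro x (hx : 0 ≤ x)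
      simp only [hp, hq, mem_Ici]
      positivity
    · simpa only [hp, hq] using injOn_one_add_mul_div_add hF hFG
  refine hpersp.congr fun x (hx : 0 ≤ x) ↦ ?_
  simp only [hp, hq, awgnDivergenceIntegrand, awgnLogRatio]
  field

lemma continuousOn_awgnDivergenceIntegrand (hF : 0 < F) (hG : 0 ≤ G) :
    ContinuousOn (awgnDivergenceIntegrand F G) (Ici 0) := by
  unfold awgnDivergenceIntegrand awgnLogRatio
  refine .mul (by fun_prop) (.log (.div (by fun_prop) (by fun_prop) ?_) ?_)
  all_goals
    intro x (hx : 0 ≤ x)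
    positivity

@[fun_prop]
lemma measurable_awgnLogRatio : Measurable (awgnLogRatio F G) := by
  unfold awgnLogRatio
  fun_prop

lemma abs_awgnLogRatio_le (hF : 0 < F) (hG : 0 < G) {x : ℝ} (hx : 0 ≤ x) :
    |awgnLogRatio F G x| ≤ max |Real.log F| |Real.log G| := by
  have hpos : 0 < (1 + G * x) / (F + x) := by positivity
  rw [← abs_neg (Real.log F), ← Real.log_inv]
  rcases le_total 1 (F * G) with hFG | hFG
  · have hlower : F⁻¹ ≤ (1 + G * x) / (F + x) := by
      rw [le_div_iff₀ (by positivity), inv_mul_le_iff₀ hF]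
      nlinarith
    have hupper : (1 + G * x) / (F + x) ≤ G := by
      rw [div_le_iff₀ (by positivity)]
      linarith
    exact abs_le_max_abs_abs (Real.log_le_log (by positivity) hlower)
      (Real.log_le_log hpos hupper)
  · have hlower : G ≤ (1 + G * x) / (F + x) := by
      rw [le_div_iff₀ (by positivity)]
      linarith
    have hupper : (1 + G * x) / (F + x) ≤ F⁻¹ := by
      rw [div_le_iff₀ (by positivity), ← div_eq_inv_mul, le_div_iff₀ hF]
      nlinarith
    rw [max_comm]
    exact abs_le_max_abs_abs (Real.log_le_log hG hlower) (Real.log_le_log hpos hupper)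

lemma integrable_mul_awgnLogRatio_comp (hF : 0 < F) (hG : 0 < G) {α : Type*}
    {mα : MeasurableSpace α} {μ : Measure α} {f g : α → ℝ} (hf : Integrable f μ)
    (hg : Measurable g) (hpos : ∀ x, 0 ≤ g x) :
    Integrable (fun x ↦ f x * awgnLogRatio F G (g x)) μ :=
  hf.mul_bdd (Measurable.aestronglyMeasurable (by fun_prop))
    (.of_forall fun x ↦ abs_awgnLogRatio_le hF hG (hpos x))

lemma integrable_awgnLogRatio_comp (hF : 0 < F) (hG : 0 < G) {α : Type*}
    {mα : MeasurableSpace α} {μ : Measure α} [IsFiniteMeasure μ] {g : α → ℝ}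
    (hg : Measurable g) (hpos : ∀ x, 0 ≤ g x) :
    Integrable (fun x ↦ awgnLogRatio F G (g x)) μ := by
  simpa only [one_mul] using integrable_mul_awgnLogRatio_comp hF hG (integrable_const 1) hg hpos

lemma integrable_awgnDivergenceIntegrand_exp (hF : 0 < F) (hG : 0 < G) (m : ℝ) (v : ℝ≥0) :
    Integrable (fun x ↦ awgnDivergenceIntegrand F G (Real.exp x)) (gaussianReal m v) :=
  integrable_mul_awgnLogRatio_comp hF hG
    ((integrable_const 1).add ((integrable_exp_gaussianReal m v).const_mul G))
    Real.measurable_exp fun x ↦ (Real.exp_pos x).le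

lemma log_add_mul_log_eq_awgnLogRatio (hF : 0 < F) (hG : 0 < G) {x y : ℝ} (hx : 0 ≤ x)
    (hy : 0 < y) :
    Real.log ((1 + G * x) / (1 + F⁻¹ * x)) + G * Real.log ((1 + G⁻¹ * y⁻¹) / (1 + F * y⁻¹)) =
      awgnLogRatio F G x + G * awgnLogRatio F G y + (Real.log F - G * Real.log G) := by
  have hleft : (1 + G * x) / (1 + F⁻¹ * x) = (1 + G * x) / (F + x) * F := by
    field
  have hright : (1 + G⁻¹ * y⁻¹) / (1 + F * y⁻¹) = (1 + G * y) / (F + y) / G := by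
    field
  rw [hleft, hright, Real.log_mul (by positivity) hF.ne', Real.log_div (by positivity) hG.ne',
    awgnLogRatio, awgnLogRatio]
  ring

lemma integral_awgnDivergenceIntegrand_exp (hF : 0 < F) (hG : 0 < G) (v : ℝ≥0) :
    ∫ x, awgnDivergenceIntegrand F G (Real.exp x) ∂gaussianReal (-(v / 2)) v =
      ∫ x, awgnLogRatio F G (Real.exp x) ∂gaussianReal (-(v / 2)) v +
        G * ∫ x, awgnLogRatio F G (Real.exp x) ∂gaussianReal (v / 2) v := by
  have htilt : ∫ x, awgnLogRatio F G (Real.exp x) ∂gaussianReal (v / 2) v =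
      ∫ x, Real.exp x * awgnLogRatio F G (Real.exp x) ∂gaussianReal (-(v / 2)) v := by
    convert! integral_gaussianReal_add_mul_var (-(v / 2)) 1 v
      fun x ↦ awgnLogRatio F G (Real.exp x) using 2
    · congr 1
      ring
    · ext x
      simp
  have hint : Integrable (fun x ↦ awgnLogRatio F G (Real.exp x)) (gaussianReal (-(v / 2)) v) :=
    integrable_awgnLogRatio_comp hF hG Real.measurable_exp fun x ↦ (Real.exp_pos x).le
  have hint_exp : Integrable (fun x ↦ Real.exp x * awgnLogRatio F G (Real.exp x))
      (gaussianReal (-(v / 2)) v) :=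
    integrable_mul_awgnLogRatio_comp hF hG (integrable_exp_gaussianReal _ v) Real.measurable_exp
      fun x ↦ (Real.exp_pos x).le
  rw [htilt, ← integral_const_mul, ← integral_add hint (hint_exp.const_mul G)]
  congr 1 with x
  rw [awgnDivergenceIntegrand]
  ring

theorem awgnPenaltyH1_eq_integral (hF : 0 < F) (hG : 0 < G) {s : ℝ} {v : ℝ≥0}
    (hv : v = 2 * s ^ 2) :
    awgnPenaltyH1 F G s =
      ∫ x, awgnDivergenceIntegrand F G (Real.exp x) ∂gaussianReal (-(v / 2)) v +
        (Real.log F - G * Real.log G) := by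
  let X (m ν : ℝ) : ℝ := m + √2 * s * ν
  have hlaw (m : ℝ) : (gaussianReal 0 1).map (X m) = gaussianReal m v := by
    rw [gaussianReal_map_add_mul, mul_zero, add_zero]
    congr 1
    ext
    simp [hv, mul_pow]
  have hint (m : ℝ) : Integrable (fun ν ↦ awgnLogRatio F G (Real.exp (X m ν)))
      (gaussianReal 0 1) :=
    integrable_awgnLogRatio_comp hF hG (by fun_prop) fun ν ↦ (Real.exp_pos _).le
  have hchange (m : ℝ) : ∫ ν, awgnLogRatio F G (Real.exp (X m ν)) ∂gaussianReal 0 1 =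
      ∫ x, awgnLogRatio F G (Real.exp x) ∂gaussianReal m v := by
    rw [← hlaw m, integral_map (by fun_prop) (Measurable.aestronglyMeasurable (by fun_prop))]
  have hhalf : (v : ℝ) / 2 = s ^ 2 := by
    rw [hv]
    ring
  calc awgnPenaltyH1 F G s
      = ∫ ν, (awgnLogRatio F G (Real.exp (X (-(v / 2)) ν)) +
          G * awgnLogRatio F G (Real.exp (X (v / 2) ν)) +
            (Real.log F - G * Real.log G)) ∂gaussianReal 0 1 := by
        rw [awgnPenaltyH1]
        congr 1 with ν
        have hneg : -s ^ 2 - √2 * s * ν = -X (v / 2) ν := by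
          rw [hhalf]
          ring
        rw [hneg, Real.exp_neg, ← hhalf]
        exact log_add_mul_log_eq_awgnLogRatio hF hG (Real.exp_pos _).le (Real.exp_pos _)
    _ = ∫ x, awgnLogRatio F G (Real.exp x) ∂gaussianReal (-(v / 2)) v +
          G * ∫ x, awgnLogRatio F G (Real.exp x) ∂gaussianReal (v / 2) v +
            (Real.log F - G * Real.log G) := by
        rw [integral_add ((hint _).fun_add ((hint _).const_mul G)) (integrable_const _),
          integral_add (hint _) ((hint _).const_mul G), integral_const_mul, hchange, hchange,
          integral_const, probReal_univ, one_smul]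
    _ = _ := by rw [integral_awgnDivergenceIntegrand_exp hF hG]

theorem awgnPenaltyH1_strictMonoOn_general (hF : 0 < F) (hG : 0 < G) (hFG : F * G ≠ 1) :
    StrictMonoOn (awgnPenaltyH1 F G) (Ici 0) := by
  intro s (hs : 0 ≤ s) t (ht : 0 ≤ t) hst
  lift s to ℝ≥0 using hs
  lift t to ℝ≥0 using ht
  rw [awgnPenaltyH1_eq_integral hF hG (s := s) (v := 2 * s ^ 2) (by push_cast; rfl),
    awgnPenaltyH1_eq_integral hF hG (s := t) (v := 2 * t ^ 2) (by push_cast; rfl)]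
  have hvar : 2 * s ^ 2 < 2 * t ^ 2 := by
    have : s < t := hst
    gcongr
  exact add_lt_add_left (strictMono_integral_comp_exp_gaussianReal
    (strictConvexOn_awgnDivergenceIntegrand hF hG.le hFG)
    (continuousOn_awgnDivergenceIntegrand hF hG.le)
    (fun v ↦ integrable_awgnDivergenceIntegrand_exp hF hG _ v) hvar) _

end AWGN

/-- Lemma 2 of the paper, `H₁` case: if `F, G > 1`, `F² ≥ G` and `G² ≥ F`, then the AWGN
channel penalty term `C₁` is strictly increasing in the signaling separation `s > 0`. -/
theorem awgnPenaltyH1_strictMonoOn (F G : ℝ) (hF : 1 < F) (hG : 1 < G)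
    (hF2G : G ≤ F^2) (hG2F : F ≤ G^2) :
    StrictMonoOn (awgnPenaltyH1 F G) (Set.Ioi (0 : ℝ)) :=
  (awgnPenaltyH1_strictMonoOn_general (by positivity) (by positivity)
    (one_lt_mul_of_lt_of_le hF hG.le).ne').mono Ioi_subset_Ici_self
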